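/- Let 𝔭 ⊂ O_k be a prime ideal not containing 2 nor any coefficient of the diagonal admissible form f of dimension n+1. For r ≥ 1, the kernel of the natural reduction homomorphism θ : (Q/𝔭^{r+1}Q)¹ → (Q/𝔭^{r}Q)¹ consists exactly of the elements 1 + Σ_{|M|=2} t_M e_M with t_M ∈ 𝔭^r/𝔭^{r+1}, and has cardinality N(𝔭)^{n(n+1)/2}. -/

import Mathlib

open NumberField CliffordAlgebra

namespace KerRed

variable {R : Type*} [CommRing R] {m : ℕ}

/-- sign of moving generator `i` into place in `M` -/
def sg (R : Type*) [CommRing R] {m : ℕ} (i : Fin m) (M : Finset (Fin m)) : R :=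
  ∏ j ∈ M, if j < i then -1 else 1

def cf (c : Fin m → R) (i : Fin m) (M : Finset (Fin m)) : R := if i ∈ M then c i else 1

/-- toggle -/
def tg (i : Fin m) (M : Finset (Fin m)) : Finset (Fin m) := symmDiff M {i}

lemma tg_of_mem {i : Fin m} {M : Finset (Fin m)} (h : i ∈ M) : tg i M = M.erase i := by
  ext x; simp only [tg, Finset.mem_symmDiff, Finset.mem_singleton, Finset.mem_erase]
  by_cases hx : x = i
  · subst hx; simp [h]
  · simp [hx]

lemma tg_of_notMem {i : Fin m} {M : Finset (Fin m)} (h : i ∉ M) : tg i M = insert i M := by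
  ext x; simp only [tg, Finset.mem_symmDiff, Finset.mem_singleton, Finset.mem_insert]
  by_cases hx : x = i
  · subst hx; simp [h]
  · simp [hx]

lemma tg_tg (i : Fin m) (M : Finset (Fin m)) : tg i (tg i M) = M :=
  symmDiff_symmDiff_cancel_right _ _

lemma tg_comm (i j : Fin m) (M : Finset (Fin m)) : tg i (tg j M) = tg j (tg i M) :=
  symmDiff_right_comm _ _ _

lemma tg_inj (i : Fin m) {M N : Finset (Fin m)} (h : tg i M = tg i N) : M = N := by
  rw [← tg_tg i M, h, tg_tg]

lemma mem_tg_of_ne {i j : Fin m} (h : i ≠ j) (M : Finset (Fin m)) : i ∈ tg j M ↔ i ∈ M := by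
  simp [tg, Finset.mem_symmDiff, h]

lemma mem_tg_self {i : Fin m} (M : Finset (Fin m)) : i ∈ tg i M ↔ i ∉ M := by
  simp [tg, Finset.mem_symmDiff]

lemma sg_insert {i j : Fin m} {M : Finset (Fin m)} (h : j ∉ M) :
    sg R i (insert j M) = (if j < i then -1 else 1) * sg R i M := by
  simp [sg, Finset.prod_insert h]

lemma sg_tg (i j : Fin m) (M : Finset (Fin m)) :
    sg R i (tg j M) = (if j < i then -1 else 1) * sg R i M := by
  by_cases h : j ∈ M
  · rw [tg_of_mem h]
    conv_rhs => rw [← Finset.insert_erase h, sg_insert (Finset.notMem_erase j M)]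
    split_ifs <;> simp
  · rw [tg_of_notMem h, sg_insert h]

lemma sg_sq (i : Fin m) (M : Finset (Fin m)) : sg R i M * sg R i M = 1 := by
  rw [sg, ← Finset.prod_mul_distrib]
  apply Finset.prod_eq_one
  intro j _; split_ifs <;> simp

lemma sg_of_lt {i : Fin m} {M : Finset (Fin m)} (h : ∀ x ∈ M, i < x) : sg R i M = 1 := by
  rw [sg]
  apply Finset.prod_eq_one
  intro j hj; rw [if_neg (not_lt.2 (h j hj).le)]

lemma cf_tg_of_ne (c : Fin m → R) {i j : Fin m} (h : i ≠ j) (M) : cf c i (tg j M) = cf c i M := by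
  simp [cf, mem_tg_of_ne h]

lemma cf_mul_self (c : Fin m → R) (i : Fin m) (M) : cf c i (tg i M) * cf c i M = c i := by
  simp only [cf, mem_tg_self]
  by_cases h : i ∈ M <;> simp [h]

def uc (c : Fin m → R) (i : Fin m) (M : Finset (Fin m)) : R := sg R i M * cf c i M

lemma uc_self (c : Fin m → R) (i : Fin m) (M) : uc c i M * uc c i (tg i M) = c i := by
  have h1 := cf_mul_self c i M
  have h2 := sg_sq (R := R) i M
  have h3 := sg_tg (R := R) i i M
  simp only [lt_irrefl, if_false, one_mul] at h3
  rw [uc, uc, h3]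
  linear_combination (cf c i M * cf c i (tg i M)) * h2 + h1

lemma uc_anti (c : Fin m → R) {i j : Fin m} (h : i ≠ j) (M) :
    uc c j M * uc c i (tg j M) = - (uc c i M * uc c j (tg i M)) := by
  rw [uc, uc, uc, uc, cf_tg_of_ne c h, cf_tg_of_ne c h.symm, sg_tg, sg_tg]
  rcases lt_or_gt_of_ne h with h | h
  · rw [if_neg (not_lt.2 h.le), if_pos h]; ring
  · rw [if_neg (not_lt.2 h.le), if_pos h]; ring

noncomputable def T (c : Fin m → R) (i : Fin m) :
    Module.End R (Finset (Fin m) →₀ R) :=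
  Finsupp.linearCombination R (fun M => uc c i M • Finsupp.single (tg i M) (1 : R))

lemma T_single (c : Fin m → R) (i : Fin m) (M) :
    T c i (Finsupp.single M 1) = uc c i M • Finsupp.single (tg i M) (1 : R) := by
  simp [T]

lemma T_sq (c : Fin m → R) (i : Fin m) : T c i * T c i = algebraMap R _ (c i) := by
  refine Finsupp.lhom_ext' fun M => LinearMap.ext_ring ?_
  simp only [LinearMap.comp_apply, Finsupp.lsingle_apply, Module.End.mul_apply, T_single, map_smul,
    Module.algebraMap_end_apply, smul_smul, tg_tg, uc_self]

lemma T_anti (c : Fin m → R) {i j : Fin m} (h : i ≠ j) : T c i * T c j = - (T c j * T c i) := by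
  refine Finsupp.lhom_ext' fun M => LinearMap.ext_ring ?_
  simp only [LinearMap.comp_apply, Finsupp.lsingle_apply, Module.End.mul_apply, T_single, map_smul,
    smul_smul, LinearMap.neg_apply, tg_comm i j, uc_anti c h, neg_smul]

lemma sum_sq {A : Type*} [Ring A] [Algebra R A] (c : Fin m → R) (t : Fin m → A)
    (h1 : ∀ i, t i * t i = algebraMap R A (c i)) (h2 : ∀ i j, i ≠ j → t i * t j = - (t j * t i))
    (v : Fin m → R) (s : Finset (Fin m)) :
    (∑ i ∈ s, v i • t i) * (∑ i ∈ s, v i • t i) = algebraMap R A (∑ i ∈ s, c i * v i ^ 2) := by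
  induction s using Finset.induction_on with
  | empty => simp
  | insert a s ha ih =>
    rw [Finset.sum_insert ha, Finset.sum_insert ha, add_mul, mul_add, mul_add, ih, map_add]
    have e1 : v a • t a * v a • t a = algebraMap R A (c a * v a ^ 2) := by
      rw [smul_mul_smul_comm, h1, Algebra.smul_def, ← map_mul]; congr 1; ring
    have e2 : v a • t a * ∑ i ∈ s, v i • t i = - ((∑ i ∈ s, v i • t i) * v a • t a) := by
      rw [Finset.mul_sum, Finset.sum_mul, ← Finset.sum_neg_distrib]
      refine Finset.sum_congr rfl fun i hi => ?_
      rw [smul_mul_smul_comm, smul_mul_smul_comm, h2 a i (fun h => ha (h ▸ hi)), smul_neg,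
        mul_comm (v a)]
    rw [e1, e2]; abel

section cliff

variable (c : Fin m → R) (Qf : QuadraticForm R (Fin m → R))

noncomputable def rho (hQf : ∀ x, Qf x = ∑ i, c i * x i ^ 2) :
    CliffordAlgebra Qf →ₐ[R] Module.End R (Finset (Fin m) →₀ R) :=
  CliffordAlgebra.lift Qf ⟨∑ i, (LinearMap.proj i : (Fin m → R) →ₗ[R] R).smulRight (T c i), by
    intro v
    have := sum_sq c (T c) (T_sq c) (fun i j h => T_anti c h) v Finset.univ
    simpa [hQf, LinearMap.sum_apply] using this⟩

lemma rho_g (hQf : ∀ x, Qf x = ∑ i, c i * x i ^ 2) (i : Fin m) :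
    rho c Qf hQf (ι Qf (Pi.single i 1)) = T c i := by
  rw [rho, CliffordAlgebra.lift_ι_apply]
  simp [LinearMap.sum_apply, Pi.single_apply]

/-- generators -/
noncomputable def g (i : Fin m) : CliffordAlgebra Qf := ι Qf (Pi.single i 1)

noncomputable def E (M : Finset (Fin m)) : CliffordAlgebra Qf :=
  ((M.sort (· ≤ ·)).map fun i => ι Qf (Pi.single i 1)).prod

lemma ι_eq_sum (v : Fin m → R) : ι Qf v = ∑ i, v i • g Qf i := by
  conv_lhs => rw [pi_eq_sum_univ' v, map_sum]
  refine Finset.sum_congr rfl fun i _ => ?_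
  rw [map_smul, g]

lemma E_empty : E Qf ∅ = 1 := by simp [E]

lemma E_insert {i : Fin m} {M : Finset (Fin m)} (h : ∀ x ∈ M, i < x) :
    E Qf (insert i M) = g Qf i * E Qf M := by
  rw [E, Finset.sort_insert _ (fun b hb => (h b hb).le) (fun hh => lt_irrefl _ (h i hh))]
  simp [E, g]

lemma E_singleton (i : Fin m) : E Qf {i} = g Qf i := by
  have := E_insert Qf (i := i) (M := ∅) (by simp)
  simpa [E_empty] using this

variable {Qf} {c} (hQf : ∀ x, Qf x = ∑ i, c i * x i ^ 2)
include hQf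

lemma g_sq (i : Fin m) : g Qf i * g Qf i = algebraMap R _ (c i) := by
  rw [g, ι_sq_scalar, hQf]; simp [Pi.single_apply]

lemma g_anti {i j : Fin m} (h : i ≠ j) : g Qf i * g Qf j = - (g Qf j * g Qf i) := by
  apply ι_mul_ι_comm_of_isOrtho
  rw [QuadraticMap.isOrtho_def, hQf, hQf, hQf, ← Finset.sum_add_distrib]
  refine Finset.sum_congr rfl fun x _ => ?_
  by_cases h1 : x = i
  · subst h1; simp [h]
  · simp [h1]

lemma rho_E (M : Finset (Fin m)) :
    rho c Qf hQf (E Qf M) (Finsupp.single ∅ 1) = Finsupp.single M 1 := by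
  induction M using Finset.induction_on_min with
  | empty => simp [E_empty]
  | insert a s h ih =>
    have hn : a ∉ s := fun hh => lt_irrefl _ (h a hh)
    rw [E_insert Qf h, map_mul, Module.End.mul_apply, ih, g, rho_g, T_single, uc, sg_of_lt h,
      cf, if_neg hn, tg_of_notMem hn]
    simp

lemma g_mul_E (i : Fin m) (M : Finset (Fin m)) :
    g Qf i * E Qf M = uc c i M • E Qf (tg i M) := by
  induction M using Finset.induction_on_min with
  | empty => simp [tg_of_notMem, uc, sg, cf, E_singleton, E_empty]
  | insert a s h ih =>
    have hn : a ∉ s := fun hh => lt_irrefl _ (h a hh)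
    rcases lt_trichotomy i a with hi | hi | hi
    · have h' : ∀ x ∈ insert a s, i < x := by
        intro x hx
        rcases Finset.mem_insert.1 hx with rfl | hx
        · exact hi
        · exact hi.trans (h x hx)
      have hn' : i ∉ insert a s := fun hh => lt_irrefl _ (h' i hh)
      rw [tg_of_notMem hn', E_insert Qf h', uc, sg_of_lt h', cf, if_neg hn']
      simp
    · subst hi
      rw [tg_of_mem (Finset.mem_insert_self _ _), Finset.erase_insert hn, E_insert Qf h,
        ← mul_assoc, g_sq hQf, uc, sg_insert hn, sg_of_lt h, cf,
        if_pos (Finset.mem_insert_self _ _)]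
      simp [Algebra.smul_def]
    · have hne : i ≠ a := hi.ne'
      have h' : ∀ x ∈ tg i s, a < x := by
        intro x hx
        by_cases hx' : x = i
        · rwa [hx']
        · exact h x ((mem_tg_of_ne hx' s).1 hx)
      have hh' : a ∉ tg i s := fun hh => lt_irrefl _ (h' a hh)
      rw [E_insert Qf h, ← mul_assoc, g_anti hQf hne, neg_mul, mul_assoc, ih, mul_smul_comm,
        ← E_insert Qf h', ← tg_of_notMem hh', tg_comm, ← tg_of_notMem hn, uc, uc, sg_tg, if_pos hi,
        cf_tg_of_ne c hne]
      simp

lemma E_span : Submodule.span R (Set.range (E Qf)) = ⊤ := by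
  rw [eq_top_iff]
  rintro x -
  induction x using CliffordAlgebra.left_induction with
  | algebraMap r =>
    rw [Algebra.algebraMap_eq_smul_one, ← E_empty Qf]
    exact Submodule.smul_mem _ _ (Submodule.subset_span ⟨_, rfl⟩)
  | add x y hx hy => exact Submodule.add_mem _ hx hy
  | ι_mul x v hx =>
    rw [ι_eq_sum, Finset.sum_mul]
    refine Submodule.sum_mem _ fun i _ => ?_
    rw [smul_mul_assoc]
    refine Submodule.smul_mem _ _ ?_
    induction hx using Submodule.span_induction with
    | mem y hy =>
      obtain ⟨M, rfl⟩ := hy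
      rw [g_mul_E hQf]
      exact Submodule.smul_mem _ _ (Submodule.subset_span ⟨_, rfl⟩)
    | zero => simp
    | add x y _ _ hx hy => rw [mul_add]; exact Submodule.add_mem _ hx hy
    | smul a x _ hx => rw [mul_smul_comm]; exact Submodule.smul_mem _ _ hx

lemma E_linInd : LinearIndependent R (E Qf) := by
  have : LinearIndependent R
      (((LinearMap.applyₗ (Finsupp.single ∅ 1)).comp (rho c Qf hQf).toLinearMap :
        CliffordAlgebra Qf →ₗ[R] (Finset (Fin m) →₀ R)) ∘ (E Qf)) := by
    have h : (((LinearMap.applyₗ (Finsupp.single ∅ 1)).comp (rho c Qf hQf).toLinearMap :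
        CliffordAlgebra Qf →ₗ[R] (Finset (Fin m) →₀ R)) ∘ (E Qf)) =
        fun M => Finsupp.single M (1 : R) := by
      funext M
      simpa using rho_E hQf M
    rw [h]
    exact Finsupp.linearIndependent_single_one R _
  exact LinearIndependent.of_comp _ this

noncomputable def B : Module.Basis (Finset (Fin m)) R (CliffordAlgebra Qf) :=
  Module.Basis.mk (E_linInd hQf) (E_span hQf).ge

lemma B_apply (M) : B hQf M = E Qf M := by simp [B]

/-- commutation sign -/
def et (R : Type*) [CommRing R] {m : ℕ} (i : Fin m) (M : Finset (Fin m)) : R :=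
  (-1) ^ M.card * (if i ∈ M then -1 else 1)

lemma E_mul_g (i : Fin m) (M : Finset (Fin m)) :
    E Qf M * g Qf i = et R i M • (g Qf i * E Qf M) := by
  induction M using Finset.induction_on_min with
  | empty => simp [E_empty, et]
  | insert a s h ih =>
    have hn : a ∉ s := fun hh => lt_irrefl _ (h a hh)
    rw [E_insert Qf h, mul_assoc, ih, mul_smul_comm, ← mul_assoc, ← mul_assoc]
    by_cases hia : i = a
    · subst hia
      congr 1
      simp [et, hn, Finset.card_insert_of_notMem hn, pow_succ]
    · rw [g_anti hQf (Ne.symm hia), neg_mul, smul_neg, ← neg_smul]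
      congr 1
      by_cases his : i ∈ s <;> simp [et, hia, his, Finset.card_insert_of_notMem hn, pow_succ]

lemma involute_E (M : Finset (Fin m)) :
    involute (E Qf M) = ((-1 : R) ^ M.card) • E Qf M := by
  induction M using Finset.induction_on_min with
  | empty => simp [E_empty]
  | insert a s h ih =>
    have hn : a ∉ s := fun hh => lt_irrefl _ (h a hh)
    rw [E_insert Qf h, map_mul, ih, g, involute_ι, Finset.card_insert_of_notMem hn, pow_succ]
    simp

lemma reverse_E (M : Finset (Fin m)) :
    reverse (Q := Qf) (E Qf M) = ((-1 : R) ^ (M.card.choose 2)) • E Qf M := by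
  induction M using Finset.induction_on_min with
  | empty => simp [E_empty]
  | insert a s h ih =>
    have hn : a ∉ s := fun hh => lt_irrefl _ (h a hh)
    rw [E_insert Qf h, reverse.map_mul, ih, Finset.card_insert_of_notMem hn,
      show reverse (Q := Qf) (g Qf a) = g Qf a from reverse_ι _, smul_mul_assoc, E_mul_g hQf,
      smul_smul, et, if_neg hn, Nat.choose_succ_succ' s.card 1, Nat.choose_one_right, pow_add,
      mul_one, mul_comm]

lemma repr_E (M N) : (B hQf).repr (E Qf M) N = if M = N then 1 else 0 := by
  rw [← B_apply hQf, Module.Basis.repr_self, Finsupp.single_apply]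

lemma lin_ext {f f' : CliffordAlgebra Qf →ₗ[R] R} (h : ∀ M, f (E Qf M) = f' (E Qf M))
    (x : CliffordAlgebra Qf) : f x = f' x := by
  have : f = f' := (B hQf).ext fun M => by rw [B_apply]; exact h M
  rw [this]

lemma repr_involute (x : CliffordAlgebra Qf) (M) :
    (B hQf).repr (involute x) M = (-1) ^ M.card * (B hQf).repr x M := by
  refine lin_ext hQf (f := ((B hQf).coord M).comp (involute (Q := Qf)).toLinearMap)
    (f' := ((-1 : R) ^ M.card) • (B hQf).coord M) (fun N => ?_) x
  by_cases h : N = M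
  · subst h; simp [involute_E hQf, repr_E]
  · simp [involute_E hQf, repr_E, h]

lemma repr_reverse (x : CliffordAlgebra Qf) (M) :
    (B hQf).repr (reverse (Q := Qf) x) M = (-1) ^ (M.card.choose 2) * (B hQf).repr x M := by
  refine lin_ext hQf (f := ((B hQf).coord M).comp (reverse (Q := Qf)))
    (f' := ((-1 : R) ^ (M.card.choose 2)) • (B hQf).coord M) (fun N => ?_) x
  by_cases h : N = M
  · subst h; simp [reverse_E hQf, repr_E]
  · simp [reverse_E hQf, repr_E, h]

lemma repr_g_mul (i : Fin m) (x : CliffordAlgebra Qf) (M) :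
    (B hQf).repr (g Qf i * x) (tg i M) = uc c i M * (B hQf).repr x M := by
  refine lin_ext hQf (f := ((B hQf).coord (tg i M)).comp (LinearMap.mulLeft R (g Qf i)))
    (f' := (uc c i M) • (B hQf).coord M) (fun N => ?_) x
  by_cases h : N = M
  · subst h; simp [g_mul_E hQf, repr_E]
  · have h' : tg i N ≠ tg i M := fun hh => h (tg_inj i hh)
    simp [g_mul_E hQf, repr_E, h, h']

lemma repr_mul_g (i : Fin m) (x : CliffordAlgebra Qf) (M) :
    (B hQf).repr (x * g Qf i) (tg i M) = et R i M * (uc c i M * (B hQf).repr x M) := by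
  refine lin_ext hQf (f := ((B hQf).coord (tg i M)).comp (LinearMap.mulRight R (g Qf i)))
    (f' := (et R i M * uc c i M) • (B hQf).coord M) (fun N => ?_) x |>.trans ?_
  · by_cases h : N = M
    · subst h; simp [g_mul_E hQf, E_mul_g hQf, repr_E]
    · have h' : tg i N ≠ tg i M := fun hh => h (tg_inj i hh)
      simp [g_mul_E hQf, E_mul_g hQf, repr_E, h, h']
  · simp [mul_assoc]

lemma repr_ι (v : Fin m → R) (M) (h : M.card ≠ 1) : (B hQf).repr (ι Qf v) M = 0 := by
  rw [ι_eq_sum, map_sum, Finsupp.finsetSum_apply]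
  refine Finset.sum_eq_zero fun i _ => ?_
  rw [map_smul, ← E_singleton, Finsupp.smul_apply, repr_E, if_neg, smul_zero]
  rintro rfl
  simp at h

lemma mem_smul_top (I : Ideal R) (x : CliffordAlgebra Qf) :
    x ∈ I • (⊤ : Submodule R (CliffordAlgebra Qf)) ↔ ∀ M, (B hQf).repr x M ∈ I := by
  constructor
  · intro h M
    induction h using Submodule.smul_induction_on' with
    | smul r hr n _ =>
      rw [map_smul, Finsupp.smul_apply, smul_eq_mul]; exact I.mul_mem_right _ hr
    | add x _ y _ hx hy => rw [map_add, Finsupp.add_apply]; exact I.add_mem hx hy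
  · intro h
    rw [← (B hQf).sum_repr x]
    exact Submodule.sum_mem _ fun M _ => Submodule.smul_mem_smul (h M) trivial

lemma reverse_mem (I : Ideal R) {x : CliffordAlgebra Qf}
    (hx : x ∈ I • (⊤ : Submodule R (CliffordAlgebra Qf))) :
    reverse (Q := Qf) x ∈ I • (⊤ : Submodule R (CliffordAlgebra Qf)) := by
  rw [mem_smul_top hQf] at hx ⊢
  intro M
  rw [repr_reverse]
  exact I.mul_mem_left _ (hx M)

omit hQf

lemma mul_mem_smul_top (I J : Ideal R) {x y : CliffordAlgebra Qf}
    (hx : x ∈ I • (⊤ : Submodule R (CliffordAlgebra Qf)))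
    (hy : y ∈ J • (⊤ : Submodule R (CliffordAlgebra Qf))) :
    x * y ∈ (I * J) • (⊤ : Submodule R (CliffordAlgebra Qf)) := by
  induction hx using Submodule.smul_induction_on' with
  | add x _ y _ hx hy => rw [add_mul]; exact Submodule.add_mem _ hx hy
  | smul r hr n _ =>
    induction hy using Submodule.smul_induction_on' with
    | add x _ y _ hx hy => rw [mul_add]; exact Submodule.add_mem _ hx hy
    | smul r' hr' n' _ =>
      rw [smul_mul_smul_comm]
      exact Submodule.smul_mem_smul (Ideal.mul_mem_mul hr hr') trivial

lemma mul_mem_l (I : Ideal R) {x : CliffordAlgebra Qf} (y : CliffordAlgebra Qf)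
    (hx : x ∈ I • (⊤ : Submodule R (CliffordAlgebra Qf))) :
    x * y ∈ I • (⊤ : Submodule R (CliffordAlgebra Qf)) := by
  have := mul_mem_smul_top I ⊤ hx (y := y) (by rw [Submodule.top_smul]; trivial)
  rwa [Ideal.mul_top] at this

lemma mul_mem_r (I : Ideal R) {x : CliffordAlgebra Qf} (y : CliffordAlgebra Qf)
    (hx : x ∈ I • (⊤ : Submodule R (CliffordAlgebra Qf))) :
    y * x ∈ I • (⊤ : Submodule R (CliffordAlgebra Qf)) := by
  have := mul_mem_smul_top ⊤ I (x := y) (by rw [Submodule.top_smul]; trivial) hx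
  rwa [Ideal.top_mul] at this

include hQf

lemma E_even {M : Finset (Fin m)} (h : M.card = 2) : E Qf M ∈ evenOdd Qf 0 := by
  obtain ⟨i, j, hij, rfl⟩ := Finset.card_eq_two.1 h
  have key : ∀ i j : Fin m, i < j → E Qf {i, j} ∈ evenOdd Qf 0 := by
    intro i j hij
    rw [E_insert Qf (by simpa using hij), E_singleton]
    exact ι_mul_ι_mem_evenOdd_zero _ _ _
  rcases lt_or_gt_of_ne hij with h | h
  · exact key i j h
  · rw [Finset.pair_comm]; exact key j i h

lemma comm_E {M : Finset (Fin m)} (h : M.card = 2) (i : Fin m) :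
    E Qf M * g Qf i - g Qf i * E Qf M ∈ LinearMap.range (ι Qf) := by
  rw [E_mul_g hQf]
  by_cases hi : i ∈ M
  · rw [g_mul_E hQf]
    have hc : (tg i M).card = 1 := by rw [tg_of_mem hi, Finset.card_erase_of_mem hi, h]
    obtain ⟨j, hj⟩ := Finset.card_eq_one.1 hc
    rw [hj, E_singleton]
    have : g Qf j ∈ LinearMap.range (ι Qf) := ⟨_, rfl⟩
    exact Submodule.sub_mem _ (Submodule.smul_mem _ _ (Submodule.smul_mem _ _ this))
      (Submodule.smul_mem _ _ this)
  · simp [et, h, hi]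

lemma comm_sum (t : Finset (Fin m) → R) (ht : ∀ M, M.card ≠ 2 → t M = 0) (v : Fin m → R) :
    (∑ M, t M • E Qf M) * ι Qf v - ι Qf v * (∑ M, t M • E Qf M) ∈ LinearMap.range (ι Qf) := by
  have : (∑ M, t M • E Qf M) * ι Qf v - ι Qf v * (∑ M, t M • E Qf M) =
      ∑ M, ∑ i, (t M * v i) • (E Qf M * g Qf i - g Qf i * E Qf M) := by
    rw [ι_eq_sum]
    simp only [smul_sub, Finset.sum_sub_distrib]
    congr 1
    · rw [Finset.sum_comm]
      simp only [Finset.sum_mul, Finset.mul_sum, smul_mul_smul_comm]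
    · simp only [Finset.sum_mul, Finset.mul_sum, smul_mul_smul_comm, mul_comm (v _)]
  rw [this]
  refine Submodule.sum_mem _ fun M _ => Submodule.sum_mem _ fun i _ => ?_
  by_cases h : M.card = 2
  · exact Submodule.smul_mem _ _ (comm_E hQf h i)
  · rw [ht M h]; simp

lemma reverse_sum (t : Finset (Fin m) → R) (ht : ∀ M, M.card ≠ 2 → t M = 0) :
    reverse (Q := Qf) (∑ M, t M • E Qf M) = - ∑ M, t M • E Qf M := by
  rw [map_sum, ← Finset.sum_neg_distrib]
  refine Finset.sum_congr rfl fun M _ => ?_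
  by_cases h : M.card = 2
  · rw [map_smul, reverse_E hQf, h]; simp
  · rw [ht M h]; simp

lemma repr_sum (t : Finset (Fin m) → R) (M) : (B hQf).repr (∑ M, t M • E Qf M) M = t M := by
  rw [map_sum, Finsupp.finsetSum_apply]
  simp [repr_E]

/-- forward: conditions on `a = s - 1`. -/
lemma forward [IsDedekindDomain R] [CharZero R] (𝔭 : Ideal R) (hp : 𝔭.IsPrime)
    (h2 : (2 : R) ∉ 𝔭) (hc : ∀ i, c i ∉ 𝔭) (r : ℕ) (hr : 1 ≤ r) (a : CliffordAlgebra Qf)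
    (ha : a ∈ (𝔭 ^ r) • (⊤ : Submodule R (CliffordAlgebra Qf)))
    (hev : 1 + a ∈ evenOdd Qf 0)
    (h1 : (1 + a) * reverse (Q := Qf) (1 + a) - 1 ∈
      (𝔭 ^ (r + 1)) • (⊤ : Submodule R (CliffordAlgebra Qf)))
    (hv : ∀ v : Fin m → R, ∃ w, (1 + a) * ι Qf v * reverse (Q := Qf) (1 + a) - ι Qf w ∈
      (𝔭 ^ (r + 1)) • (⊤ : Submodule R (CliffordAlgebra Qf)))
    (M : Finset (Fin m)) (hM : M.card ≠ 2) : (B hQf).repr a M ∈ 𝔭 ^ (r + 1) := by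
  have hle : 𝔭 ^ r * 𝔭 ^ r ≤ 𝔭 ^ (r + 1) := by
    rw [← pow_add]; exact Ideal.pow_le_pow_right (by omega)
  have hle' := Submodule.smul_mono_left (N := (⊤ : Submodule R (CliffordAlgebra Qf))) hle
  have hra := reverse_mem hQf _ ha
  have hadd : a + reverse (Q := Qf) a ∈
      (𝔭 ^ (r + 1)) • (⊤ : Submodule R (CliffordAlgebra Qf)) := by
    have := Submodule.sub_mem _ h1 (hle' (mul_mem_smul_top _ _ ha hra))
    convert this using 1
    rw [map_add, reverse.map_one]; noncomm_ring
  rcases Nat.even_or_odd M.card with hme | hmo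
  · rcases M.eq_empty_or_nonempty with rfl | ⟨i, hi⟩
    · have := (mem_smul_top hQf _ _).1 hadd ∅
      rw [map_add, Finsupp.add_apply, repr_reverse] at this
      simp only [Finset.card_empty, Nat.choose_zero_succ, pow_zero, one_mul, ← two_mul] at this
      exact (hp.mul_mem_pow 𝔭 this).resolve_left h2
    · obtain ⟨w, hw⟩ := hv (Pi.single i 1)
      change (1 + a) * g Qf i * reverse (Q := Qf) (1 + a) - ι Qf w ∈ _ at hw
      have h3 : a * g Qf i - g Qf i * a + (g Qf i - ι Qf w) ∈
          (𝔭 ^ (r + 1)) • (⊤ : Submodule R (CliffordAlgebra Qf)) := by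
        have h4 := hle' (mul_mem_smul_top _ _ (mul_mem_l _ (g Qf i) ha) hra)
        have h5 := mul_mem_r _ (g Qf i) hadd
        have := Submodule.sub_mem _ (Submodule.sub_mem _ hw h4) h5
        convert this using 1
        rw [map_add, reverse.map_one]; noncomm_ring
      have h6 := (mem_smul_top hQf _ _).1 h3 (tg i M)
      have hcard : (tg i M).card ≠ 1 := by
        rw [tg_of_mem hi, Finset.card_erase_of_mem hi]
        have := Finset.card_pos.2 ⟨i, hi⟩
        omega
      rw [map_add, map_sub, map_sub, Finsupp.add_apply, Finsupp.sub_apply, Finsupp.sub_apply,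
        repr_mul_g, repr_g_mul, g, repr_ι hQf _ _ hcard, repr_ι hQf _ _ hcard, et, hme.neg_one_pow,
        if_pos hi, uc, cf, if_pos hi] at h6
      have h7 : 2 * (c i * (B hQf).repr a M) ∈ 𝔭 ^ (r + 1) := by
        have := Ideal.mul_mem_left _ (- sg R i M) h6
        convert this using 1
        linear_combination (-2 * c i * (B hQf).repr a M) * sg_sq (R := R) i M
      exact (hp.mul_mem_pow 𝔭 ((hp.mul_mem_pow 𝔭 h7).resolve_left h2)).resolve_left (hc i)
  · have h3 : involute a = a := by
      have := involute_eq_of_mem_even hev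
      rw [map_add, map_one] at this
      exact add_left_cancel this
    have h4 := repr_involute hQf a M
    rw [h3, hmo.neg_one_pow] at h4
    have h5 : (2 : R) * (B hQf).repr a M = 0 := by linear_combination h4
    rw [(mul_eq_zero.1 h5).resolve_left two_ne_zero]
    exact zero_mem _

end cliff

lemma card_pow_quot (k : Type*) [Field k] [NumberField k] (𝔭 : Ideal (𝓞 k)) (hp : 𝔭.IsPrime)
    (hp0 : 𝔭 ≠ ⊥) (r : ℕ) :
    Nat.card ((𝔭 ^ r : Ideal (𝓞 k)) ⧸
      (Submodule.comap (Submodule.subtype (𝔭 ^ r : Ideal (𝓞 k))) (𝔭 ^ (r + 1) : Ideal (𝓞 k)))) =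
      Ideal.absNorm 𝔭 := by
  have hle : (𝔭 ^ (r + 1) : Ideal (𝓞 k)) ≤ 𝔭 ^ r := Ideal.pow_le_pow_right (by omega)
  have h := AddSubgroup.relIndex_mul_index
    (H := (𝔭 ^ (r + 1) : Ideal (𝓞 k)).toAddSubgroup) (K := (𝔭 ^ r : Ideal (𝓞 k)).toAddSubgroup) hle
  have hi : ∀ j : ℕ, (𝔭 ^ j : Ideal (𝓞 k)).toAddSubgroup.index = Ideal.absNorm 𝔭 ^ j := by
    intro j
    rw [← map_pow, Ideal.absNorm_apply]
    rfl
  rw [hi, hi, pow_succ, mul_comm] at h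
  have hpos : Ideal.absNorm 𝔭 ^ r ≠ 0 :=
    pow_ne_zero _ (fun h0 => hp0 (Ideal.absNorm_eq_zero_iff.1 h0))
  exact Nat.eq_of_mul_eq_mul_left (Nat.pos_of_ne_zero hpos) h

end KerRed

/-- Let `Q` be the even Clifford `O_k`-order of the diagonal form `f` with unit diagonal
values `c i` modulo a prime `𝔭 ⊂ O_k` not containing `2`, and let `r ≥ 1`.  The kernel of
the reduction homomorphism `θ : (Q/𝔭^{r+1}Q)¹ → (Q/𝔭^{r}Q)¹` consists exactly of the
classes of `1 + Σ_{|M|=2} t_M e_M` with `t_M ∈ 𝔭^r` (taken mod `𝔭^{r+1}`), and it has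
cardinality `N(𝔭)^{n(n+1)/2}`. -/
theorem kernel_of_reduction_description_and_card
    (k : Type*) [Field k] [NumberField k] (n : ℕ)
    (c : Fin (n + 1) → 𝓞 k)
    (Qf : QuadraticForm (𝓞 k) (Fin (n + 1) → 𝓞 k))
    (hQf : ∀ x, Qf x = ∑ i, c i * x i ^ 2)
    (𝔭 : Ideal (𝓞 k)) (hp : 𝔭.IsPrime) (hp0 : 𝔭 ≠ ⊥)
    (h2 : (2 : 𝓞 k) ∉ 𝔭) (hc : ∀ i, c i ∉ 𝔭)
    (r : ℕ) (hr : 1 ≤ r)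
    (J1 J2 : Submodule (𝓞 k) (CliffordAlgebra Qf))
    (hJ1 : J1 = (𝔭 ^ (r + 1) : Ideal (𝓞 k)) • (⊤ : Submodule (𝓞 k) (CliffordAlgebra Qf)))
    (hJ2 : J2 = (𝔭 ^ r : Ideal (𝓞 k)) • (⊤ : Submodule (𝓞 k) (CliffordAlgebra Qf)))
    -- the standard basis elements `e_M` (ordered products of generators):
    (e : Finset (Fin (n + 1)) → CliffordAlgebra Qf)
    (he : ∀ M : Finset (Fin (n + 1)),
      e M = ((M.sort (· ≤ ·)).map fun i => ι Qf (Pi.single i 1)).prod)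
    -- the congruence kernel `K = ker θ ⊆ (Q/𝔭^{r+1}Q)¹`:
    (K : Set (CliffordAlgebra Qf ⧸ J1))
    (hK : K = {x : CliffordAlgebra Qf ⧸ J1 | (∃ s : CliffordAlgebra Qf,
        Submodule.Quotient.mk (p := J1) s = x ∧ s ∈ evenOdd Qf 0 ∧
        Submodule.Quotient.mk (p := J1) (s * reverse (Q := Qf) s)
          = Submodule.Quotient.mk (p := J1) 1 ∧
        ∀ v : Fin (n + 1) → 𝓞 k, ∃ w,
          Submodule.Quotient.mk (p := J1) (s * ι Qf v * reverse (Q := Qf) s)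
            = Submodule.Quotient.mk (p := J1) (ι Qf w)) ∧
      ∀ s : CliffordAlgebra Qf, Submodule.Quotient.mk (p := J1) s = x →
        Submodule.Quotient.mk (p := J2) s = Submodule.Quotient.mk (p := J2) 1}) :
    K = {x : CliffordAlgebra Qf ⧸ J1 | ∃ t : Finset (Fin (n + 1)) → 𝓞 k,
        (∀ M, t M ∈ 𝔭 ^ r) ∧ (∀ M, M.card ≠ 2 → t M = 0) ∧
        x = Submodule.Quotient.mk (p := J1)
          (1 + ∑ M : Finset (Fin (n + 1)), t M • e M)} ∧
    Nat.card K = Ideal.absNorm 𝔭 ^ (n * (n + 1) / 2) := by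
  classical
  have heE : e = KerRed.E Qf := funext fun M => he M
  subst hJ1 hJ2
  have hle : (𝔭 ^ r * 𝔭 ^ r : Ideal (𝓞 k)) ≤ 𝔭 ^ (r + 1) := by
    rw [← pow_add]; exact Ideal.pow_le_pow_right (by omega)
  have hle' := Submodule.smul_mono_left (N := (⊤ : Submodule (𝓞 k) (CliffordAlgebra Qf))) hle
  have hJ := Submodule.smul_mono_left (N := (⊤ : Submodule (𝓞 k) (CliffordAlgebra Qf)))
    (Ideal.pow_le_pow_right (I := 𝔭) (Nat.le_succ r))
  have hdesc : K = {x | ∃ t : Finset (Fin (n + 1)) → 𝓞 k,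
        (∀ M, t M ∈ 𝔭 ^ r) ∧ (∀ M, M.card ≠ 2 → t M = 0) ∧
        x = Submodule.Quotient.mk (1 + ∑ M : Finset (Fin (n + 1)), t M • e M)} := by
    rw [hK, heE]
    ext x
    simp only [Set.mem_ofPred_eq]
    constructor
    · rintro ⟨⟨s, hsx, hev, h1, hv⟩, hs⟩
      have hs1 := (Submodule.Quotient.eq _).1 (hs s hsx)
      obtain ⟨a, rfl⟩ : ∃ a, s = 1 + a := ⟨s - 1, by abel⟩
      rw [add_sub_cancel_left] at hs1
      have key := KerRed.forward hQf 𝔭 hp h2 hc r hr a hs1 hev ((Submodule.Quotient.eq _).1 h1)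
        (fun v => (hv v).imp fun w hw => (Submodule.Quotient.eq _).1 hw)
      refine ⟨fun M => if M.card = 2 then (KerRed.B hQf).repr a M else 0, fun M => ?_,
        fun M hM => if_neg hM, ?_⟩
      · dsimp only
        split_ifs
        · exact (KerRed.mem_smul_top hQf _ _).1 hs1 M
        · exact zero_mem _
      · rw [← hsx, Submodule.Quotient.eq, add_sub_add_left_eq_sub, KerRed.mem_smul_top hQf]
        intro M
        rw [map_sub, Finsupp.sub_apply, KerRed.repr_sum hQf]
        split_ifs with h
        · rw [sub_self]; exact zero_mem _
        · rw [sub_zero]; exact key M h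
    · rintro ⟨t, ht, ht2, rfl⟩
      set a := ∑ M, t M • KerRed.E Qf M with hadef
      have ha : a ∈ (𝔭 ^ r) • (⊤ : Submodule (𝓞 k) (CliffordAlgebra Qf)) :=
        Submodule.sum_mem _ fun M _ => Submodule.smul_mem_smul (ht M) trivial
      have hra : reverse (Q := Qf) (1 + a) = 1 - a := by
        rw [map_add, reverse.map_one, hadef, KerRed.reverse_sum hQf t ht2, sub_eq_add_neg]
      refine ⟨⟨1 + a, rfl, ?_, ?_, fun v => ?_⟩, fun s hs => ?_⟩
      · refine Submodule.add_mem _ (SetLike.GradedOne.one_mem) (Submodule.sum_mem _ fun M _ => ?_)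
        by_cases h : M.card = 2
        · exact Submodule.smul_mem _ _ (KerRed.E_even hQf h)
        · rw [ht2 M h, zero_smul]; exact zero_mem _
      · rw [Submodule.Quotient.eq, hra]
        have := Submodule.neg_mem _ (hle' (KerRed.mul_mem_smul_top _ _ ha ha))
        convert this using 1
        noncomm_ring
      · obtain ⟨w, hw⟩ := KerRed.comm_sum hQf t ht2 v
        refine ⟨v + w, ?_⟩
        rw [Submodule.Quotient.eq, hra, map_add, hw, ← hadef]
        have := Submodule.neg_mem _
          (hle' (KerRed.mul_mem_smul_top _ _ (KerRed.mul_mem_l _ (ι Qf v) ha) ha))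
        convert this using 1
        noncomm_ring
      · rw [Submodule.Quotient.eq] at hs ⊢
        have := Submodule.add_mem _ (hJ hs) ha
        convert this using 1
        abel
  refine ⟨hdesc, ?_⟩
  let P := {M : Finset (Fin (n + 1)) // M.card = 2}
  let G : (P → (𝔭 ^ r : Ideal (𝓞 k))) →ₗ[𝓞 k] CliffordAlgebra Qf :=
    ∑ M : P, ((LinearMap.toSpanSingleton (𝓞 k) (CliffordAlgebra Qf) (e M.1)).comp
      (Submodule.subtype (𝔭 ^ r : Ideal (𝓞 k)))).comp (LinearMap.proj M)
  have hG : ∀ t, G t = ∑ M : P, (t M : 𝓞 k) • e M.1 := by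
    intro t; simp [G, LinearMap.sum_apply]
  have hG2 : ∀ t, G t = ∑ M : Finset (Fin (n + 1)),
      (if h : M.card = 2 then (t ⟨M, h⟩ : 𝓞 k) else 0) • KerRed.E Qf M := by
    intro t
    rw [hG, heE, ← Finset.sum_subset (Finset.subset_univ {M : Finset (Fin (n + 1)) | M.card = 2})]
    · rw [Finset.sum_subtype (p := fun M : Finset (Fin (n + 1)) => M.card = 2)
        ({M : Finset (Fin (n + 1)) | M.card = 2} : Finset _) (by simp)]
      refine Finset.sum_congr rfl fun M _ => ?_
      rw [dif_pos M.2]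
    · intro M _ hM
      rw [dif_neg (by simpa using hM), zero_smul]
  let g := (Submodule.mkQ ((𝔭 ^ (r + 1)) • (⊤ : Submodule (𝓞 k) (CliffordAlgebra Qf)))).comp G
  have hker : LinearMap.ker g = Submodule.pi Set.univ fun _ : P =>
      Submodule.comap (Submodule.subtype (𝔭 ^ r : Ideal (𝓞 k))) (𝔭 ^ (r + 1) : Ideal (𝓞 k)) := by
    ext t
    rw [LinearMap.mem_ker, LinearMap.comp_apply, Submodule.mkQ_apply,
      Submodule.Quotient.mk_eq_zero, KerRed.mem_smul_top hQf, hG2]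
    simp only [KerRed.repr_sum hQf, Submodule.mem_pi, Set.mem_univ, true_imp_iff,
      Submodule.mem_comap, Submodule.subtype_apply]
    constructor
    · rintro h ⟨M, hM⟩
      have := h M
      rwa [dif_pos hM] at this
    · intro h M
      split_ifs with hM
      · exact h ⟨M, hM⟩
      · exact zero_mem _
  have hKg : K = (fun x => Submodule.Quotient.mk 1 + x) '' (LinearMap.range g : Set _) := by
    rw [hdesc]
    ext x
    simp only [Set.mem_ofPred_eq, Set.mem_image, SetLike.mem_coe, LinearMap.mem_range]
    constructor
    · rintro ⟨t, ht, ht2, rfl⟩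
      refine ⟨_, ⟨fun M => ⟨t M.1, ht M.1⟩, rfl⟩, ?_⟩
      rw [LinearMap.comp_apply, Submodule.mkQ_apply, ← Submodule.Quotient.mk_add, hG2, heE]
      congr 2
      refine Finset.sum_congr rfl fun M _ => ?_
      split_ifs with h
      · rfl
      · rw [ht2 M h]
    · rintro ⟨_, ⟨t, rfl⟩, rfl⟩
      refine ⟨fun M => if h : M.card = 2 then (t ⟨M, h⟩ : 𝓞 k) else 0, fun M => ?_,
        fun M hM => dif_neg hM, ?_⟩
      · dsimp only
        split_ifs with h
        · exact (t ⟨M, h⟩).2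
        · exact zero_mem _
      · rw [LinearMap.comp_apply, Submodule.mkQ_apply, ← Submodule.Quotient.mk_add, hG2, heE]
  rw [hKg, Nat.card_image_of_injective (add_right_injective _)]
  have h1 : Nat.card (LinearMap.range g) = Nat.card (P → ((𝔭 ^ r : Ideal (𝓞 k)) ⧸
      (Submodule.comap (Submodule.subtype (𝔭 ^ r : Ideal (𝓞 k))) (𝔭 ^ (r + 1) : Ideal (𝓞 k))))) :=
    Nat.card_congr ((g.quotKerEquivRange.symm.trans
      (Submodule.quotEquivOfEq _ _ hker)).trans (Submodule.quotientPi _)).toEquiv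
  refine h1.trans ?_
  rw [Nat.card_fun, KerRed.card_pow_quot k 𝔭 hp hp0 r, Nat.card_eq_fintype_card,
    Fintype.card_finset_len, Fintype.card_fin, Nat.choose_two_right, Nat.add_sub_cancel, mul_comm n]
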